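/- Let ω > 0 and h > 0 with ω·h < 2π, and set c₋₁ = 1/ω² − (h/(2ω))·cot(ω·h/2). Then for every real number λ, 1 + (h/2)·λ + c₋₁·λ² > 0; in particular the discriminant satisfies (h/2)² − 4·c₋₁ < −h²/12 < 0. -/

import Mathlib

/-!
The discriminant bound amounts to `h² / 12 < c₋₁`. Put `u = ω h / 2`. Since
`c₋₁ = (1 - u cot u) / ω²` and `h² / 12 = (u² / 3) / ω²`, it reduces to
`u cot u < 1 - u² / 3` on `(0, π)`. Multiplied by `sin u`, this says that
`(1 - u² / 3) sin u - u cos u`, which vanishes at `0`, is positive; its derivative is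
`(u / 3) (sin u - u cos u)`, and the last factor in turn vanishes at `0` and has derivative
`u sin u`.
-/

open Set Real

theorem lt_of_hasDerivAt_pos {f f' : ℝ → ℝ} {a b : ℝ} (hab : a < b)
    (hf : ContinuousOn f (Icc a b)) (hff' : ∀ x ∈ Ioo a b, HasDerivAt f (f' x) x)
    (hf' : ∀ x ∈ Ioo a b, 0 < f' x) : f a < f b := by
  obtain ⟨c, hc, hslope⟩ := exists_hasDerivAt_eq_slope f f' hab hf hff'
  have hpos : 0 < (f b - f a) / (b - a) := hslope ▸ hf' c hc
  exact sub_pos.1 ((div_pos_iff_of_pos_right (sub_pos.2 hab)).1 hpos)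

theorem hasDerivAt_sin_sub_mul_cos (x : ℝ) :
    HasDerivAt (fun y ↦ sin y - y * cos y) (x * sin x) x := by
  refine ((hasDerivAt_sin x).sub ((hasDerivAt_id' x).mul (hasDerivAt_cos x))).congr_deriv ?_
  ring

theorem mul_cos_lt_sin {u : ℝ} (hu₀ : 0 < u) (huπ : u < π) : u * cos u < sin u := by
  have hlt := lt_of_hasDerivAt_pos hu₀
    (HasDerivAt.continuousOn fun x _ ↦ hasDerivAt_sin_sub_mul_cos x)
    (fun x _ ↦ hasDerivAt_sin_sub_mul_cos x)
    fun x hx ↦ mul_pos hx.1 (sin_pos_of_pos_of_lt_pi hx.1 (hx.2.trans huπ))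
  simpa using hlt

theorem hasDerivAt_one_sub_sq_div_three_mul_sin_sub_mul_cos (x : ℝ) :
    HasDerivAt (fun y ↦ (1 - y ^ 2 / 3) * sin y - y * cos y)
      (x / 3 * (sin x - x * cos x)) x := by
  have hpoly : HasDerivAt (fun y : ℝ ↦ 1 - y ^ 2 / 3) (-(2 * x / 3)) x := by
    simpa using ((hasDerivAt_pow 2 x).div_const 3).const_sub 1
  refine ((hpoly.mul (hasDerivAt_sin x)).sub
    ((hasDerivAt_id' x).mul (hasDerivAt_cos x))).congr_deriv ?_
  ring

theorem mul_cos_lt_one_sub_sq_div_three_mul_sin {u : ℝ} (hu₀ : 0 < u) (huπ : u < π) :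
    u * cos u < (1 - u ^ 2 / 3) * sin u := by
  have hlt := lt_of_hasDerivAt_pos hu₀
    (HasDerivAt.continuousOn fun x _ ↦ hasDerivAt_one_sub_sq_div_three_mul_sin_sub_mul_cos x)
    (fun x _ ↦ hasDerivAt_one_sub_sq_div_three_mul_sin_sub_mul_cos x)
    fun x hx ↦ mul_pos (div_pos hx.1 three_pos)
      (sub_pos.2 (mul_cos_lt_sin hx.1 (hx.2.trans huπ)))
  simpa using hlt

theorem mul_cot_lt_one_sub_sq_div_three {u : ℝ} (hu₀ : 0 < u) (huπ : u < π) :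
    u * cot u < 1 - u ^ 2 / 3 := by
  rw [cot_eq_cos_div_sin, ← mul_div_assoc, div_lt_iff₀ (sin_pos_of_pos_of_lt_pi hu₀ huπ)]
  exact mul_cos_lt_one_sub_sq_div_three_mul_sin hu₀ huπ

theorem sq_div_twelve_lt_one_div_sq_sub_mul_cot {ω h : ℝ} (hpos : 0 < ω * h)
    (hlt : ω * h < 2 * π) :
    h ^ 2 / 12 < 1 / ω ^ 2 - h / (2 * ω) * cot (ω * h / 2) := by
  have hω : ω ≠ 0 := left_ne_zero_of_mul hpos.ne'
  have hcot : ω * h / 2 * cot (ω * h / 2) < 1 - (ω * h / 2) ^ 2 / 3 :=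
    mul_cot_lt_one_sub_sq_div_three (by linarith) (by linarith)
  calc
    h ^ 2 / 12 = (ω * h / 2) ^ 2 / 3 / ω ^ 2 := by field_simp; ring
    _ < (1 - ω * h / 2 * cot (ω * h / 2)) / ω ^ 2 := by gcongr; linarith
    _ = 1 / ω ^ 2 - h / (2 * ω) * cot (ω * h / 2) := by field_simp

theorem quadratic_pos_of_discrim_neg {R : Type*} [CommRing R] [LinearOrder R]
    [IsStrictOrderedRing R] {a b c : R} (ha : 0 < a) (hdiscrim : discrim a b c < 0) (x : R) :
    0 < a * (x * x) + b * x + c := by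
  have hsquare : 4 * a * (a * (x * x) + b * x + c) = (2 * a * x + b) ^ 2 - discrim a b c := by
    rw [discrim]
    ring
  have hmul : 0 < 4 * a * (a * (x * x) + b * x + c) := by
    rw [hsquare]
    exact sub_pos.2 (hdiscrim.trans_le (sq_nonneg _))
  exact pos_of_mul_pos_right hmul (by positivity)

theorem integratorA_numerator_positive
    (ω h : ℝ) (hω : 0 < ω) (hh : 0 < h) (hωh : ω * h < 2 * Real.pi)
    (cm1 : ℝ)
    (hcm1 : cm1 = 1 / ω ^ 2 - (h / (2 * ω)) * Real.cot (ω * h / 2)) :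
    (∀ l : ℝ, 1 + (h / 2) * l + cm1 * l ^ 2 > 0) ∧
    (h / 2) ^ 2 - 4 * cm1 < -h ^ 2 / 12 ∧ -h ^ 2 / 12 < 0 := by
  have hsq : 0 < h ^ 2 := sq_pos_of_pos hh
  have hcoeff : h ^ 2 / 12 < cm1 :=
    hcm1 ▸ sq_div_twelve_lt_one_div_sq_sub_mul_cot (mul_pos hω hh) hωh
  have hbound : (h / 2) ^ 2 - 4 * cm1 < -h ^ 2 / 12 := by linarith
  have hneg : -h ^ 2 / 12 < 0 := by linarith
  have hdiscrim : discrim cm1 (h / 2) 1 < 0 := by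
    rw [discrim, mul_one]
    exact hbound.trans hneg
  refine ⟨fun l ↦ ?_, hbound, hneg⟩
  calc
    0 < cm1 * (l * l) + h / 2 * l + 1 :=
      quadratic_pos_of_discrim_neg (by linarith) hdiscrim l
    _ = 1 + h / 2 * l + cm1 * l ^ 2 := by ring
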